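/- (Exact bias representation of the AIPW score in the interactive regression model.) For all bounded measurable g1, g0 : 𝒳 → ℝ and all measurable m : 𝒳 → ℝ with ε ≤ m ≤ 1 − ε, the expected AIPW score satisfies the identity E[ψ(g1, g0, m)] = E[(m(X) − m₀(X)) · ((g1(X) − g₀1(X)) / m(X) + (g0(X) − g₀0(X)) / (1 − m(X)))]. -/

import Mathlib

open MeasureTheory

/-!
Both arms of the score are instances of one pseudo-outcome `g + A / e * (Y - g)`, with
`(A, e) = (D, m)` for the treated and `(A, e) = (1 - D, 1 - m)` for the controls. If
`p = E[A | 𝓖]` and `p * μ = E[A * Y | 𝓖]`, pulling the `𝓖`-measurable factors `e⁻¹` and `g` out of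
the conditional expectation shows that the pseudo-outcome has conditional mean
`g + p / e * (μ - g) = μ + (e - p) / e * (g - μ)`. The second summand is the bias of one arm;
the difference of the two biases is the claimed representation, since
`(1 - m) - (1 - m₀) = -(m - m₀)`.
-/

section PseudoOutcome

variable {Ω : Type*} {A Y g e p μ : Ω → ℝ}

/-- The augmented inverse-probability-weighted pseudo-outcome of one treatment arm, whose mean
estimates the mean potential outcome of that arm: `A` is the indicator of the arm, `e` the working
propensity of the arm, and `g` the working outcome regression. -/
noncomputable def aipwPseudoOutcome (A Y g e : Ω → ℝ) : Ω → ℝ :=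
  fun ω ↦ g ω + A ω / e ω * (Y ω - g ω)

/-- The conditional bias of `aipwPseudoOutcome A Y g e` when the true propensity of the arm is `p`
and its true outcome regression is `μ`. -/
noncomputable def aipwArmBias (g e p μ : Ω → ℝ) : Ω → ℝ :=
  fun ω ↦ (e ω - p ω) / e ω * (g ω - μ ω)

lemma aipwPseudoOutcome_eq_add_inv_mul :
    aipwPseudoOutcome A Y g e =
      g + e⁻¹ * ((fun ω ↦ A ω * Y ω) - fun ω ↦ A ω * g ω) := by
  ext ω
  simp only [aipwPseudoOutcome, Pi.add_apply, Pi.mul_apply, Pi.sub_apply, Pi.inv_apply]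
  ring

lemma aipwPseudoOutcome_sub_compl (D Y g1 g0 m : Ω → ℝ) (ω : Ω) :
    aipwPseudoOutcome D Y g1 m ω
        - aipwPseudoOutcome (fun ω ↦ 1 - D ω) Y g0 (fun ω ↦ 1 - m ω) ω =
      (g1 ω - g0 ω) + (D ω / m ω) * (Y ω - g1 ω)
        - ((1 - D ω) / (1 - m ω)) * (Y ω - g0 ω) := by
  simp only [aipwPseudoOutcome]
  ring

lemma aipwArmBias_sub_compl (g1 g0 m m₀ g₀1 g₀0 : Ω → ℝ) (ω : Ω) :
    aipwArmBias g1 m m₀ g₀1 ω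
        - aipwArmBias g0 (fun ω ↦ 1 - m ω) (fun ω ↦ 1 - m₀ ω) g₀0 ω =
      (m ω - m₀ ω) * ((g1 ω - g₀1 ω) / m ω + (g0 ω - g₀0 ω) / (1 - m ω)) := by
  simp only [aipwArmBias]
  ring

variable {𝓖 mΩ : MeasurableSpace Ω} {P : Measure Ω}

lemma integrable_aipwPseudoOutcome {ε : ℝ} (hε : 0 < ε) (he : AEStronglyMeasurable e P)
    (hεe : ∀ ω, ε ≤ e ω) (hg : Integrable g P) (hAY : Integrable (fun ω ↦ A ω * Y ω) P)
    (hAg : Integrable (fun ω ↦ A ω * g ω) P) :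
    Integrable (aipwPseudoOutcome A Y g e) P := by
  have inv_le : ∀ ω, ‖(e⁻¹) ω‖ ≤ ε⁻¹ := fun ω ↦ by
    rw [Pi.inv_apply, norm_inv, Real.norm_of_nonneg (hε.le.trans (hεe ω))]
    exact inv_anti₀ hε (hεe ω)
  rw [aipwPseudoOutcome_eq_add_inv_mul]
  exact hg.add ((hAY.sub hAg).bdd_mul he.aemeasurable.inv.aestronglyMeasurable
    (ae_of_all P inv_le))

lemma condExp_aipwPseudoOutcome (h𝓖 : 𝓖 ≤ mΩ) [SigmaFinite (P.trim h𝓖)]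
    (hgm : StronglyMeasurable[𝓖] g) (hem : StronglyMeasurable[𝓖] e) (he : ∀ ω, e ω ≠ 0)
    (hA : Integrable A P) (hg : Integrable g P) (hAY : Integrable (fun ω ↦ A ω * Y ω) P)
    (hAg : Integrable (fun ω ↦ A ω * g ω) P) (hψ : Integrable (aipwPseudoOutcome A Y g e) P)
    (hp : p =ᵐ[P] P[A | 𝓖])
    (hμ : (fun ω ↦ p ω * μ ω) =ᵐ[P] P[fun ω ↦ A ω * Y ω | 𝓖]) :
    P[aipwPseudoOutcome A Y g e | 𝓖] =ᵐ[P] μ + aipwArmBias g e p μ := by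
  rw [aipwPseudoOutcome_eq_add_inv_mul] at hψ ⊢
  have hcorr : Integrable (e⁻¹ * ((fun ω ↦ A ω * Y ω) - fun ω ↦ A ω * g ω)) P := by
    simpa only [add_sub_cancel_left] using hψ.sub hg
  filter_upwards [condExp_add hg hcorr 𝓖,
    condExp_mul_of_stronglyMeasurable_left hem.measurable.inv.stronglyMeasurable hcorr
      (hAY.sub hAg),
    condExp_sub hAY hAg 𝓖, condExp_mul_of_stronglyMeasurable_right hgm hAg hA, hp, hμ]
    with ω hadd hpull_inv hsub hpull_g hpω hμω
  have hg_self : P[g | 𝓖] ω = g ω := congrFun (condExp_of_stronglyMeasurable h𝓖 hgm hg) ω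
  have hAgω : P[fun ω ↦ A ω * g ω | 𝓖] ω = p ω * g ω := hpull_g.trans (by simp [hpω])
  rw [hadd, Pi.add_apply, hg_self, hpull_inv, Pi.mul_apply, hsub, Pi.sub_apply, ← hμω, hAgω]
  simp only [aipwArmBias, Pi.add_apply, Pi.inv_apply]
  have heω := he ω
  field

end PseudoOutcome

section CondExp

variable {Ω E : Type*} [NormedAddCommGroup E] [NormedSpace ℝ E] [CompleteSpace E]
  {𝓖 mΩ : MeasurableSpace Ω} {P : Measure Ω} {f μ b : Ω → E}

lemma condExp_const_sub [IsFiniteMeasure P] (h𝓖 : 𝓖 ≤ mΩ) (hf : Integrable f P) (c : E) :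
    P[fun ω ↦ c - f ω | 𝓖] =ᵐ[P] fun ω ↦ c - P[f | 𝓖] ω := by
  filter_upwards [condExp_sub (integrable_const c) hf 𝓖] with ω hω
  exact hω.trans (by rw [Pi.sub_apply, condExp_const h𝓖])

lemma integral_sub_integral_of_condExp_eq_add [IsProbabilityMeasure P] (h𝓖 : 𝓖 ≤ mΩ)
    (hf : Integrable f P) (hμ : Integrable μ P) (h : P[f | 𝓖] =ᵐ[P] μ + b) :
    ∫ ω, (f ω - ∫ ω', μ ω' ∂P) ∂P = ∫ ω, b ω ∂P := by
  have hb : Integrable b P := by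
    simpa only [add_sub_cancel_left] using (integrable_condExp.congr h).sub hμ
  rw [integral_sub hf (integrable_const _), integral_const, probReal_univ, one_smul,
    ← integral_condExp h𝓖, integral_congr_ae h, integral_add' hμ hb, add_sub_cancel_left]

end CondExp

lemma integrable_comp_of_norm_le {Ω 𝓧 E : Type*} [MeasurableSpace Ω] [MeasurableSpace 𝓧]
    [NormedAddCommGroup E] {P : Measure Ω} [IsFiniteMeasure P] {X : Ω → 𝓧} (hX : Measurable X)
    {g : 𝓧 → E} (hg : StronglyMeasurable g) {C : ℝ} (hC : ∀ x, ‖g x‖ ≤ C) :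
    Integrable (fun ω ↦ g (X ω)) P :=
  .of_bound (hg.comp_measurable hX).aestronglyMeasurable C (ae_of_all P fun ω ↦ hC (X ω))

theorem aipw_bias_representation_general
    {Ω : Type*} {𝓖 mΩ : MeasurableSpace Ω} (h𝓖 : 𝓖 ≤ mΩ)
    {P : Measure Ω} [IsProbabilityMeasure P]
    {D Y : Ω → ℝ} (hD : Integrable D P)
    (hDY : Integrable (fun ω ↦ D ω * Y ω) P)
    (hDY' : Integrable (fun ω ↦ (1 - D ω) * Y ω) P)
    {m₀ g₀1 g₀0 : Ω → ℝ} (hm₀ : m₀ =ᵐ[P] P[D | 𝓖])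
    (hg₀1 : Integrable g₀1 P) (hg₀0 : Integrable g₀0 P)
    (hg₀1ver : (fun ω ↦ m₀ ω * g₀1 ω) =ᵐ[P] P[fun ω ↦ D ω * Y ω | 𝓖])
    (hg₀0ver : (fun ω ↦ (1 - m₀ ω) * g₀0 ω) =ᵐ[P] P[fun ω ↦ (1 - D ω) * Y ω | 𝓖])
    {g1 g0 : Ω → ℝ} (hg1m : StronglyMeasurable[𝓖] g1) (hg0m : StronglyMeasurable[𝓖] g0)
    (hg1 : Integrable g1 P) (hg0 : Integrable g0 P)
    (hDg1 : Integrable (fun ω ↦ D ω * g1 ω) P)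
    (hDg0 : Integrable (fun ω ↦ (1 - D ω) * g0 ω) P)
    {m : Ω → ℝ} (hm : StronglyMeasurable[𝓖] m)
    {ε : ℝ} (hε : 0 < ε) (hmbd : ∀ ω, ε ≤ m ω ∧ m ω ≤ 1 - ε) :
    ∫ ω, ((g1 ω - g0 ω) + (D ω / m ω) * (Y ω - g1 ω)
        - ((1 - D ω) / (1 - m ω)) * (Y ω - g0 ω) - ∫ ω', (g₀1 ω' - g₀0 ω') ∂P) ∂P
      = ∫ ω, (m ω - m₀ ω) *
          ((g1 ω - g₀1 ω) / m ω + (g0 ω - g₀0 ω) / (1 - m ω)) ∂P := by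
  set ψ1 := aipwPseudoOutcome D Y g1 m
  set ψ0 := aipwPseudoOutcome (fun ω ↦ 1 - D ω) Y g0 (fun ω ↦ 1 - m ω)
  set b1 := aipwArmBias g1 m m₀ g₀1
  set b0 := aipwArmBias g0 (fun ω ↦ 1 - m ω) (fun ω ↦ 1 - m₀ ω) g₀0
  have hm' : StronglyMeasurable[𝓖] fun ω ↦ 1 - m ω := stronglyMeasurable_const.sub hm
  have hεm : ∀ ω, ε ≤ m ω := fun ω ↦ (hmbd ω).1
  have hεm' : ∀ ω, ε ≤ 1 - m ω := fun ω ↦ le_sub_comm.mp (hmbd ω).2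
  have hm₀' : (fun ω ↦ 1 - m₀ ω) =ᵐ[P] P[fun ω ↦ 1 - D ω | 𝓖] :=
    (hm₀.fun_comp (1 - ·)).trans (condExp_const_sub h𝓖 hD 1).symm
  have hψ1 : Integrable ψ1 P :=
    integrable_aipwPseudoOutcome hε (hm.mono h𝓖).aestronglyMeasurable hεm hg1 hDY hDg1
  have hψ0 : Integrable ψ0 P :=
    integrable_aipwPseudoOutcome hε (hm'.mono h𝓖).aestronglyMeasurable hεm' hg0 hDY' hDg0
  have hc1 : P[ψ1 | 𝓖] =ᵐ[P] g₀1 + b1 :=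
    condExp_aipwPseudoOutcome h𝓖 hg1m hm (fun ω ↦ (hε.trans_le (hεm ω)).ne')
      hD hg1 hDY hDg1 hψ1 hm₀ hg₀1ver
  have hc0 : P[ψ0 | 𝓖] =ᵐ[P] g₀0 + b0 :=
    condExp_aipwPseudoOutcome h𝓖 hg0m hm' (fun ω ↦ (hε.trans_le (hεm' ω)).ne')
      ((integrable_const 1).sub hD) hg0 hDY' hDg0 hψ0 hm₀' hg₀0ver
  have hc : P[ψ1 - ψ0 | 𝓖] =ᵐ[P] (g₀1 - g₀0) + (b1 - b0) := by
    rw [← add_sub_add_comm]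
    exact (condExp_sub hψ1 hψ0 𝓖).trans (hc1.sub hc0)
  simpa only [ψ1, ψ0, b1, b0, Pi.sub_apply, aipwPseudoOutcome_sub_compl, aipwArmBias_sub_compl]
    using integral_sub_integral_of_condExp_eq_add h𝓖 (hψ1.sub hψ0) (hg₀1.sub hg₀0) hc

/-- Exact bias representation of the AIPW score in the interactive regression model. -/
theorem aipw_bias_representation
    {Ω 𝓧 : Type*} [MeasurableSpace Ω] [MeasurableSpace 𝓧]
    (P : MeasureTheory.Measure Ω) [MeasureTheory.IsProbabilityMeasure P]
    (X : Ω → 𝓧) (hX : Measurable X)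
    (D : Ω → ℝ) (hD : Measurable D) (hD01 : ∀ ω, D ω = 0 ∨ D ω = 1)
    (Y : Ω → ℝ) (hY : MeasureTheory.Integrable Y P)
    (hDY : MeasureTheory.Integrable (fun ω => D ω * Y ω) P)
    (hDY' : MeasureTheory.Integrable (fun ω => (1 - D ω) * Y ω) P)
    (ε : ℝ) (hε0 : 0 < ε) (hε : ε < 1 / 2)
    (m₀ : 𝓧 → ℝ) (hm₀ : Measurable m₀)
    (hm₀bd : ∀ x, ε ≤ m₀ x ∧ m₀ x ≤ 1 - ε)
    (hm₀ver : (fun ω => m₀ (X ω)) =ᵐ[P] P[D | MeasurableSpace.comap X inferInstance])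
    (g₀1 g₀0 : 𝓧 → ℝ) (hg₀1 : Measurable g₀1) (hg₀0 : Measurable g₀0)
    (C₀ : ℝ) (hg₀1bd : ∀ x, |g₀1 x| ≤ C₀) (hg₀0bd : ∀ x, |g₀0 x| ≤ C₀)
    (hg₀1ver : (fun ω => m₀ (X ω) * g₀1 (X ω))
      =ᵐ[P] P[fun ω => D ω * Y ω | MeasurableSpace.comap X inferInstance])
    (hg₀0ver : (fun ω => (1 - m₀ (X ω)) * g₀0 (X ω))
      =ᵐ[P] P[fun ω => (1 - D ω) * Y ω | MeasurableSpace.comap X inferInstance])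
    (θ₀ : ℝ) (hθ₀ : θ₀ = ∫ ω, (g₀1 (X ω) - g₀0 (X ω)) ∂P)
    (g1 g0 : 𝓧 → ℝ) (hg1 : Measurable g1) (hg0 : Measurable g0)
    (C₁ : ℝ) (hg1bd : ∀ x, |g1 x| ≤ C₁) (hg0bd : ∀ x, |g0 x| ≤ C₁)
    (m : 𝓧 → ℝ) (hm : Measurable m) (hmbd : ∀ x, ε ≤ m x ∧ m x ≤ 1 - ε) :
    ∫ ω, ((g1 (X ω) - g0 (X ω)) + (D ω / m (X ω)) * (Y ω - g1 (X ω))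
        - ((1 - D ω) / (1 - m (X ω))) * (Y ω - g0 (X ω)) - θ₀) ∂P
      = ∫ ω, (m (X ω) - m₀ (X ω)) *
          ((g1 (X ω) - g₀1 (X ω)) / m (X ω)
            + (g0 (X ω) - g₀0 (X ω)) / (1 - m (X ω))) ∂P := by
  have hD1 : ∀ᵐ ω ∂P, ‖D ω‖ ≤ 1 := ae_of_all P fun ω ↦ by rcases hD01 ω with h | h <;> simp [h]
  have hD1' : ∀ᵐ ω ∂P, ‖1 - D ω‖ ≤ 1 :=
    ae_of_all P fun ω ↦ by rcases hD01 ω with h | h <;> simp [h]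
  have hg1_int : Integrable (fun ω ↦ g1 (X ω)) P :=
    integrable_comp_of_norm_le hX hg1.stronglyMeasurable hg1bd
  have hg0_int : Integrable (fun ω ↦ g0 (X ω)) P :=
    integrable_comp_of_norm_le hX hg0.stronglyMeasurable hg0bd
  subst hθ₀
  exact aipw_bias_representation_general hX.comap_le
    (.of_bound hD.aestronglyMeasurable 1 hD1) hDY hDY' hm₀ver
    (integrable_comp_of_norm_le hX hg₀1.stronglyMeasurable hg₀1bd)
    (integrable_comp_of_norm_le hX hg₀0.stronglyMeasurable hg₀0bd) hg₀1ver hg₀0ver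
    (hg1.comp (comap_measurable X)).stronglyMeasurable
    (hg0.comp (comap_measurable X)).stronglyMeasurable hg1_int hg0_int
    (hg1_int.bdd_mul hD.aestronglyMeasurable hD1)
    (hg0_int.bdd_mul (hD.const_sub 1).aestronglyMeasurable hD1')
    (hm.comp (comap_measurable X)).stronglyMeasurable hε0 fun ω ↦ hmbd (X ω)
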